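/- Let (P, L, I) be a finite thick generalised quadrangle of order (s,t), and let G be a collineation group of (P, L, I) acting faithfully on P. If G acts transitively on L and primitively on P, then G has a unique minimal normal subgroup; that is, any two minimal normal subgroups of G are equal. -/

import Mathlib

/-!
Suppose there were two distinct minimal normal subgroups `M` and `N`. They intersect trivially, so
they commute elementwise, and both are transitive on points since the action is primitive; hence
both are regular. Identifying the point set with `M` via `m ↦ m • p`, the quadrangle becomes
invariant under left multiplication (the action of `M`) and right multiplication (the action of
`N`). The contradiction comes from showing that `M` is abelian
(`IsGroupQuadrangle.exists_isLineFamily` and `IsLineFamily.commute`): then `N` centralises `M`, and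
`M` is a transitive abelian group, hence self-centralising, so that `N ≤ M`.

*Lines through `1` are subgroups.* Let `x`, `y` be nontrivial points of a line `l` through `1`. By
invariance under both multiplications, `1`, `x⁻¹`, `y⁻¹` are pairwise collinear, and a generalised
quadrangle has no triangles. So `x⁻¹`, `y⁻¹` lie on a common line through `1`, and this forces
`x * y⁻¹ ∈ l`. It follows that `l` is a subgroup of order `s + 1`.

*Two lines through `1` commute.* Let `F` be the set of the `t + 1` lines through `1`. It is closed
under conjugation, and each nontrivial coset of `A ∈ F` contains exactly one element of the union of
`F`. In particular `A` has index `s * t + 1`. If a nontrivial `z ∈ B ∈ F` normalises `A ≠ B`, this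
uniqueness shows that `A` centralises `z`, and then that `A` and `B` commute elementwise. Line
transitivity makes all conjugacy classes of members of `F` equally large, so their common size
divides `t + 1`; it also divides the index `s * t + 1` of `A`, hence divides `s - 1`. As `B` has
`s + 1` elements, a nontrivial element of `B` must normalise `A`. So any two distinct members of `F`
commute elementwise; an easy argument with three of them shows that each is abelian, and `M` is
generated by them.
-/

/-! ### Families of subgroups -/

/-- A family `F` of `t + 1` subgroups of order `s + 1` of a group `H`: the lines through the identity
of a generalised quadrangle of order `(s, t)` with point set `H`, all of whose lines are cosets of
members of `F` and on which `H` acts by left and by right multiplication.  The field `proj` is the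
point-line projection property, and `aut` records that the lines through the identity are equivalent
under automorphisms of `H`. -/
structure IsLineFamily {H : Type*} [Group H] (F : Set (Subgroup H)) (s t : ℕ) : Prop where
  card_mem : ∀ A ∈ F, Nat.card A = s + 1
  card_family : Nat.card F = t + 1
  eq_of_mem : ∀ A ∈ F, ∀ B ∈ F, ∀ x ∈ A, x ∈ B → x ≠ 1 → A = B
  conj_mem : ∀ A ∈ F, ∀ h : H, A.map (MulAut.conj h : H →* H) ∈ F
  proj : ∀ A ∈ F, ∀ w ∉ A, ∃! y, y ∈ A ∧ ∃ B ∈ F, w * y ∈ B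
  aut : ∀ A ∈ F, ∀ B ∈ F, ∃ φ : H ≃* H, A.map (φ : H →* H) = B

namespace IsLineFamily

variable {H : Type*} [Group H] {F : Set (Subgroup H)} {s t : ℕ}

theorem exists_mem_ne_one (hF : IsLineFamily F s t) (hs : 2 ≤ s) {A : Subgroup H} (hA : A ∈ F) :
    ∃ y ∈ A, y ≠ 1 := by
  have h : A ≠ ⊥ := by
    rintro rfl
    have := hF.card_mem _ hA
    simp at this
    omega
  exact (Subgroup.ne_bot_iff_exists_ne_one.mp h).elim fun a ha =>
    ⟨a, a.2, fun h => ha (Subtype.ext h)⟩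

/-- For `y ∈ A`, the element `y * z * y⁻¹` lies both in the coset `z A` and in a member of `F`,
so the uniqueness in `proj` forces it to be `z`. -/
theorem commute_of_mem_normalizer (hF : IsLineFamily F s t) {A B : Subgroup H} (hA : A ∈ F)
    (hB : B ∈ F) (hne : A ≠ B) {z : H} (hzB : z ∈ B) (hz1 : z ≠ 1)
    (hzA : z ∈ Subgroup.normalizer (A : Set H)) {y : H} (hy : y ∈ A) : y * z = z * y := by
  have hzn : z ∉ A := fun h => hne (hF.eq_of_mem A hA B hB z h hzB hz1)
  have hu := (hF.proj A hA z hzn).unique (y₁ := 1) (y₂ := z⁻¹ * y * z * y⁻¹)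
    ⟨A.one_mem, B, hB, by simpa using hzB⟩
    ⟨A.mul_mem ((Subgroup.mem_normalizer_iff''.mp hzA y).mp hy) (A.inv_mem hy),
      _, hF.conj_mem B hB y, ⟨z, hzB, by simp [mul_assoc]⟩⟩
  have h2 : z * (z⁻¹ * y * z * y⁻¹) * y = y * z := by group
  rw [← hu] at h2
  simpa using h2.symm

/-- A nontrivial `z ∈ B` normalising `A` is centralised by `A`; so every `y ∈ A` normalises `B`,
as `B` is the only member of `F` containing `z`, and the roles can be exchanged. -/
theorem commute_of_mem_of_mem (hF : IsLineFamily F s t) {A B : Subgroup H} (hA : A ∈ F)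
    (hB : B ∈ F) (hne : A ≠ B) {z : H} (hzB : z ∈ B) (hz1 : z ≠ 1)
    (hzA : z ∈ Subgroup.normalizer (A : Set H)) {y x : H} (hy : y ∈ A) (hx : x ∈ B) :
    y * x = x * y := by
  rcases eq_or_ne y 1 with rfl | hy1
  · simp
  have hyz := hF.commute_of_mem_normalizer hA hB hne hzB hz1 hzA hy
  have hyB : y ∈ Subgroup.normalizer (B : Set H) := by
    rw [Subgroup.mem_normalizer_iff_map_conj_eq]
    refine hF.eq_of_mem _ (hF.conj_mem B hB y) B hB z ⟨z, hzB, ?_⟩ hzB hz1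
    simp [hyz]
  exact (hF.commute_of_mem_normalizer hB hA hne.symm hy hy1 hyB hx).symm

/-- By `proj` each nontrivial coset of `A` contains exactly one element of the union of `F`, so there
are as many of these cosets as there are nontrivial elements in the `t` members of `F` other
than `A`. -/
theorem index_eq [Finite H] (hF : IsLineFamily F s t) {A : Subgroup H} (hA : A ∈ F) :
    A.index = s * t + 1 := by
  classical
  let X := Σ B : {B : F // B ≠ ⟨A, hA⟩}, {b : B.1.1 // b ≠ 1}
  have hX : Nat.card X = t * s := by
    have h1 : ∀ B : {B : F // B ≠ ⟨A, hA⟩}, Nat.card {b : B.1.1 // b ≠ 1} = s := by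
      intro B
      have := hF.card_mem _ B.1.2
      have h := Nat.card_congr (Equiv.sumCompl (fun b : B.1.1 => b = 1))
      rw [Nat.card_sum, this] at h
      simp only [Nat.card_unique] at h
      simp only [ne_eq]
      omega
    have h2 : Nat.card {B : F // B ≠ ⟨A, hA⟩} = t := by
      have := hF.card_family
      have h := Nat.card_congr (Equiv.sumCompl (fun B : F => B = ⟨A, hA⟩))
      rw [Nat.card_sum, this] at h
      simp only [Nat.card_unique] at h
      simp only [ne_eq]
      omega
    have : Fintype {B : F // B ≠ ⟨A, hA⟩} := Fintype.ofFinite _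
    rw [Nat.card_sigma, Finset.sum_congr rfl (fun B _ => h1 B)]
    simp [← h2]
  let f : Option X → H ⧸ A := fun o => o.elim (QuotientGroup.mk 1)
    (fun x => QuotientGroup.mk (x.2.1.1 : H))
  have hnot : ∀ x : X, (x.2.1.1 : H) ∉ A := by
    rintro ⟨⟨⟨B, hB⟩, hBA⟩, ⟨⟨b, hb⟩, hb1⟩⟩ h
    exact hBA (Subtype.ext (hF.eq_of_mem B hB A hA b hb h (fun h => hb1 (Subtype.ext h))))
  have hf : Function.Bijective f := by
    constructor
    · rintro (_ | x) (_ | y) h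
      · rfl
      · have h' := QuotientGroup.eq.mp h
        simp only [inv_one, one_mul] at h'
        exact absurd h' (hnot y)
      · have h' := QuotientGroup.eq.mp h
        simp only [mul_one, inv_mem_iff] at h'
        exact absurd h' (hnot x)
      · have h' := QuotientGroup.eq.mp h
        have hx := hnot x
        obtain ⟨⟨⟨B, hB⟩, hBA⟩, ⟨⟨b, hb⟩, hb1⟩⟩ := x
        obtain ⟨⟨⟨C, hC⟩, hCA⟩, ⟨⟨c, hc⟩, hc1⟩⟩ := y
        simp only at h' hx
        have hu := (hF.proj A hA b hx).unique (y₁ := 1) (y₂ := b⁻¹ * c)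
          ⟨A.one_mem, B, hB, by simpa using hb⟩ ⟨h', C, hC, by simpa using hc⟩
        have hbc : b = c := by
          rw [eq_comm, inv_mul_eq_one] at hu
          exact hu
        subst hbc
        have hBC : B = C := hF.eq_of_mem B hB C hC b hb hc (fun h => hb1 (Subtype.ext h))
        subst hBC
        rfl
    · intro q
      obtain ⟨w, rfl⟩ := QuotientGroup.mk_surjective q
      by_cases hw : w ∈ A
      · exact ⟨none, QuotientGroup.eq.mpr (by simpa using hw)⟩
      · obtain ⟨y, ⟨hy, B, hB, hwy⟩, -⟩ := hF.proj A hA w hw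
        have hwA : w * y ∉ A := fun h => hw ((A.mul_mem_cancel_right hy).mp h)
        refine ⟨some ⟨⟨⟨B, hB⟩, ?_⟩, ⟨⟨w * y, hwy⟩, ?_⟩⟩, QuotientGroup.eq.mpr ?_⟩
        · intro h
          cases h
          exact hwA hwy
        · intro h
          apply hwA
          rw [show w * y = 1 from congrArg Subtype.val h]
          exact A.one_mem
        · simpa using hy
  rw [Subgroup.index, ← Nat.card_congr (Equiv.ofBijective f hf), Finite.card_option, hX, mul_comm]

/-- Since the members of `F` are equivalent under automorphisms of `H`, their `H`-conjugacy classes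
all have the same size. -/
theorem index_normalizer_dvd [Finite H] (hF : IsLineFamily F s t) {A : Subgroup H} (hA : A ∈ F) :
    (Subgroup.normalizer (A : Set H)).index ∣ t + 1 := by
  classical
  let : MulAction H F :=
    { smul := fun h B => ⟨B.1.map (MulAut.conj h : H →* H), hF.conj_mem B.1 B.2 h⟩
      one_smul := fun B => Subtype.ext (by
        change B.1.map (MulAut.conj (1 : H) : H →* H) = B.1
        ext x
        simp)
      mul_smul := fun g h B => Subtype.ext (by
        change B.1.map (MulAut.conj (g * h) : H →* H) =
          (B.1.map (MulAut.conj h : H →* H)).map (MulAut.conj g : H →* H)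
        rw [Subgroup.map_map]
        congr 1
        ext x
        simp) }
  have hstab : ∀ B : F, MulAction.stabilizer H B = Subgroup.normalizer (B.1 : Set H) := by
    intro B
    ext h
    rw [Subgroup.mem_normalizer_iff_map_conj_eq, MulAction.mem_stabilizer_iff, Subtype.ext_iff]
    rfl
  have hidx : ∀ B : F, (Subgroup.normalizer (B.1 : Set H)).index =
      (Subgroup.normalizer (A : Set H)).index := by
    intro B
    obtain ⟨φ, hφ⟩ := hF.aut A hA B.1 B.2
    have h := Subgroup.map_equiv_normalizer_eq A φ
    change _ = Subgroup.normalizer ((A.map (φ : H →* H) : Subgroup H) : Set H) at h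
    rw [← hφ, ← h]
    exact Subgroup.index_map_equiv _ φ
  have : Fintype (Quotient (MulAction.orbitRel H F)) := Fintype.ofFinite _
  rw [← hF.card_family, Nat.card_congr (MulAction.selfEquivSigmaOrbitsQuotientStabilizer H F),
    Nat.card_sigma]
  refine Finset.dvd_sum fun ω _ => ?_
  change _ ∣ (MulAction.stabilizer H ω.out).index
  rw [hstab, hidx]

/-- The number of conjugates of `A` divides both `t + 1` and `s * t + 1`, hence `s - 1`. -/
theorem index_normalizer_le [Finite H] (hF : IsLineFamily F s t) (hs : 2 ≤ s) {A : Subgroup H}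
    (hA : A ∈ F) : (Subgroup.normalizer (A : Set H)).index ≤ s - 1 := by
  have h1 := hF.index_normalizer_dvd hA
  have h2 : (Subgroup.normalizer (A : Set H)).index ∣ s * t + 1 :=
    hF.index_eq hA ▸ Subgroup.index_dvd_of_le Subgroup.le_normalizer
  have h3 := Nat.dvd_sub (h1.mul_left s) h2
  rw [show s * (t + 1) - (s * t + 1) = s - 1 by rw [mul_add]; omega] at h3
  exact Nat.le_of_dvd (by omega) h3

/-- As `A` has fewer conjugates than `B` has elements, some nontrivial element of `B`
normalises `A`. -/
theorem commute_of_ne [Finite H] (hF : IsLineFamily F s t) (hs : 2 ≤ s) {A B : Subgroup H}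
    (hA : A ∈ F) (hB : B ∈ F) (hne : A ≠ B) {y x : H} (hy : y ∈ A) (hx : x ∈ B) :
    y * x = x * y := by
  have hle := hF.index_normalizer_le hs hA
  have hnot : ¬ Function.Injective
      (fun b : B => (QuotientGroup.mk (b : H) : H ⧸ Subgroup.normalizer (A : Set H))) := by
    intro hinj
    have h := Nat.card_le_card_of_injective _ hinj
    rw [hF.card_mem B hB] at h
    change s + 1 ≤ (Subgroup.normalizer (A : Set H)).index at h
    omega
  simp only [Function.Injective, not_forall] at hnot
  obtain ⟨b, c, hbc, hbc'⟩ := hnot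
  refine hF.commute_of_mem_of_mem hA hB hne (z := (b : H)⁻¹ * c) (B.mul_mem (B.inv_mem b.2) c.2)
    ?_ (QuotientGroup.eq.mp hbc) hy hx
  rw [Ne, inv_mul_eq_one]
  exact fun h => hbc' (Subtype.ext h)

/-- Members of `F` are abelian: an element of `A` is a product of elements of other members
of `F`, because a coset of one of these meets the union of `F`. -/
theorem commute_of_mem [Finite H] (hF : IsLineFamily F s t) (hs : 2 ≤ s) (ht : 2 ≤ t)
    {A : Subgroup H} (hA : A ∈ F) {x y : H} (hx : x ∈ A) (hy : y ∈ A) : x * y = y * x := by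
  have hcard : 2 < F.ncard := by
    change 2 < Nat.card F
    rw [hF.card_family]
    omega
  obtain ⟨B, hB, hBA⟩ := Set.exists_ne_of_one_lt_ncard (lt_trans one_lt_two hcard) A
  obtain ⟨C, hC, hCn⟩ : ∃ C ∈ F, C ∉ ({A, B} : Set (Subgroup H)) := by
    by_contra! h
    have h1 : F.ncard ≤ ({A, B} : Set (Subgroup H)).ncard := Set.ncard_le_ncard h
    have := Set.ncard_pair hBA.symm
    omega
  simp only [Set.mem_insert_iff, Set.mem_singleton_iff, not_or] at hCn
  obtain ⟨hCA, hCB⟩ := hCn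
  obtain ⟨b, hb, hb1⟩ := hF.exists_mem_ne_one hs hB
  have hxb : Commute x b := hF.commute_of_ne hs hA hB hBA.symm hx hb
  have hxC : ∀ c ∈ C, Commute x c := fun c hc => hF.commute_of_ne hs hA hC (Ne.symm hCA) hx hc
  by_cases hw : y * b ∈ C
  · have h := (hxC _ hw).mul_right hxb.inv_right
    rwa [mul_inv_cancel_right] at h
  obtain ⟨u, ⟨hu, E, hE, hyE⟩, -⟩ := hF.proj C hC _ hw
  by_cases hEA : E = A
  · -- then `b * u ∈ A`, and uniqueness of the projection of `b` to `C` gives `u = 1`, `b ∈ A`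
    subst hEA
    have hbu : b * u ∈ E := by
      have := E.mul_mem (E.inv_mem hy) hyE
      simpa [mul_assoc] using this
    have hbC : b ∉ C := fun h => hCB (hF.eq_of_mem C hC B hB b h hb hb1)
    have hu1 := (hF.proj C hC b hbC).unique (y₁ := 1) (y₂ := u)
      ⟨C.one_mem, B, hB, by simpa using hb⟩ ⟨hu, E, hE, hbu⟩
    subst hu1
    exact absurd (hF.eq_of_mem B hB E hE b hb (by simpa using hbu) hb1) hBA
  · have h : Commute x (y * b * u) := hF.commute_of_ne hs hA hE (Ne.symm hEA) hx hyE
    have h := (h.mul_right (hxC u hu).inv_right).mul_right hxb.inv_right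
    rwa [mul_inv_cancel_right, mul_inv_cancel_right] at h

/-- All members of `F` commute elementwise, and every element of `H` is a product of two elements
of members of `F`. -/
theorem commute [Finite H] (hF : IsLineFamily F s t) (hs : 2 ≤ s) (ht : 2 ≤ t) (x y : H) :
    Commute x y := by
  have h1 : ∀ A ∈ F, ∀ B ∈ F, ∀ x ∈ A, ∀ y ∈ B, Commute x y := by
    intro A hA B hB x hx y hy
    by_cases h : A = B
    · subst h
      exact hF.commute_of_mem hs ht hA hx hy
    · exact hF.commute_of_ne hs hA hB h hx hy
  obtain ⟨A, hA⟩ : F.Nonempty := by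
    rw [← Set.ncard_pos]
    change 0 < Nat.card F
    rw [hF.card_family]
    omega
  have h2 : ∀ w : H, ∃ B ∈ F, ∃ b ∈ B, ∃ a ∈ A, w = b * a := by
    intro w
    by_cases hw : w ∈ A
    · exact ⟨A, hA, w, hw, 1, A.one_mem, by simp⟩
    · obtain ⟨u, ⟨hu, B, hB, hwu⟩, -⟩ := hF.proj A hA w hw
      exact ⟨B, hB, _, hwu, u⁻¹, A.inv_mem hu, by simp⟩
  obtain ⟨B, hB, b, hb, a, ha, rfl⟩ := h2 x
  obtain ⟨C, hC, c, hc, d, hd, rfl⟩ := h2 y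
  exact ((h1 B hB C hC b hb c hc).mul_right (h1 B hB A hA b hb d hd)).mul_left
    ((h1 A hA C hC a ha c hc).mul_right (h1 A hA A hA a ha d hd))

end IsLineFamily

/-! ### Quadrangles invariant under left and right multiplication -/

/-- A generalised quadrangle of order `(s, t)` whose point set is a group `H`, with incidence `J`,
such that left and right multiplications by elements of `H` extend to collineations.  The field
`flag` says that any line can be moved to any other by a collineation acting on points as an
automorphism of `H` followed by a right multiplication. -/
structure IsGroupQuadrangle {H L : Type*} [Group H] (J : H → L → Prop) (s t : ℕ) : Prop where
  line_unique : ∀ p q : H, p ≠ q → ∀ l l' : L, J p l → J q l → J p l' → J q l' → l = l'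
  card_line : ∀ l : L, {p : H | J p l}.ncard = s + 1
  card_pencil : {l : L | J 1 l}.ncard = t + 1
  gq : ∀ (p : H) (l : L), ¬ J p l → ∃! qm : H × L, J p qm.2 ∧ J qm.1 qm.2 ∧ J qm.1 l
  left : ∀ a : H, ∃ σ : L → L, ∀ h l, J h l ↔ J (a * h) (σ l)
  right : ∀ a : H, ∃ σ : L → L, ∀ h l, J h l ↔ J (h * a) (σ l)
  flag : ∀ l l' : L, ∃ φ : H ≃* H, ∃ a : H, ∀ h, J h l ↔ J (φ h * a) l'

namespace IsGroupQuadrangle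

variable {H L : Type*} [Group H] {J : H → L → Prop} {s t : ℕ}

/-- The point set of the line is not contained in a set of two points. -/
theorem exists_third (hJ : IsGroupQuadrangle J s t) (hs : 2 ≤ s) (l : L) (a b : H) :
    ∃ y, J y l ∧ y ≠ a ∧ y ≠ b := by
  by_contra! h
  have h1 : {p : H | J p l}.ncard ≤ ({a, b} : Set H).ncard := by
    refine Set.ncard_le_ncard (fun y hy => ?_)
    by_cases hya : y = a
    · exact Or.inl hya
    · exact Or.inr (h y hy hya)
  rw [hJ.card_line] at h1
  have := Set.ncard_insert_le a {b}
  rw [Set.ncard_singleton] at this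
  omega

/-- The points `1`, `x⁻¹`, `y⁻¹` are pairwise collinear, so they lie on a common line, which is the
translate of `l` by `x⁻¹`. -/
theorem mul_inv_mem_line (hJ : IsGroupQuadrangle J s t) {l : L} (h1 : J 1 l) {x y : H}
    (hx : J x l) (hy : J y l) (hx1 : x ≠ 1) : J (x * y⁻¹) l := by
  obtain ⟨σ, hσ⟩ := hJ.left x⁻¹
  obtain ⟨τ, hτ⟩ := hJ.left y⁻¹
  obtain ⟨ρ, hρ⟩ := hJ.right y⁻¹
  suffices h : J y⁻¹ (σ l) by
    rw [hσ]
    simpa using h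
  by_contra hn
  have hu := (hJ.gq _ _ hn).unique (y₁ := (1, τ l)) (y₂ := (x⁻¹, σ (ρ l)))
    ⟨by simpa using (hτ 1 l).mp h1, by simpa using (hτ y l).mp hy,
      by simpa using (hσ x l).mp hx⟩
    ⟨by simpa using (hσ _ _).mp ((hρ x l).mp hx), by simpa using (hσ _ _).mp ((hρ y l).mp hy),
      by simpa using (hσ 1 l).mp h1⟩
  have h := congrArg Prod.fst hu
  simp only at h
  exact hx1 (inv_eq_one.mp h.symm)

/-- For `x ≠ 1` on a line `l` through `1`, left translation by `x⁻¹` fixes `l`: for a suitable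
`z ≠ 1` on `l`, the line `l` and hence its translate by `x⁻¹` are closed under right multiplication
by `z`, so both contain `1` and `z`. -/
theorem inv_mul_mem_line (hJ : IsGroupQuadrangle J s t) (hs : 2 ≤ s) {l : L} (h1 : J 1 l) {x : H}
    (hx : J x l) (hx1 : x ≠ 1) (h : H) : J h l ↔ J (x⁻¹ * h) l := by
  obtain ⟨y, hy, hy1, hyx⟩ := hJ.exists_third hs l 1 x
  obtain ⟨z, rfl⟩ : ∃ z, z = x * y⁻¹ := ⟨_, rfl⟩
  have hz := hJ.mul_inv_mem_line h1 hx hy hx1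
  have hz' := hJ.mul_inv_mem_line h1 hy hx hy1
  have hz1 : x * y⁻¹ ≠ 1 := fun h => hyx (mul_inv_eq_one.mp h).symm
  have hxz : J (x * (x * y⁻¹)) l := by
    simpa using hJ.mul_inv_mem_line h1 hx hz' hx1
  obtain ⟨σ, hσ⟩ := hJ.left x⁻¹
  have hl : σ l = l := hJ.line_unique 1 (x * y⁻¹) hz1.symm _ _
    (by simpa using (hσ x l).mp hx) (by simpa using (hσ _ l).mp hxz) h1 hz
  rw [hσ, hl]

theorem exists_subgroup (hJ : IsGroupQuadrangle J s t) (hs : 2 ≤ s) {l : L} (h1 : J 1 l) :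
    ∃ A : Subgroup H, ∀ h, h ∈ A ↔ J h l := by
  have hinv : ∀ x, J x l → J x⁻¹ l := by
    intro x hx
    by_cases hx1 : x = 1
    · subst hx1
      simpa using hx
    · simpa using (hJ.inv_mul_mem_line hs h1 hx hx1 1).mp h1
  refine ⟨{ carrier := {h | J h l}, mul_mem' := ?_, one_mem' := h1, inv_mem' := hinv _ },
    fun h => Iff.rfl⟩
  intro x y hx hy
  by_cases hx1 : x = 1
  · subst hx1
    simpa using hy
  · simpa using (hJ.inv_mul_mem_line hs h1 (hinv x hx) (inv_ne_one.mpr hx1) y).mp hy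

/-- The lines through the identity are subgroups and form a line family. -/
theorem exists_isLineFamily (hJ : IsGroupQuadrangle J s t) (hs : 2 ≤ s) :
    ∃ F : Set (Subgroup H), IsLineFamily F s t := by
  classical
  refine ⟨{A | ∃ l, J 1 l ∧ ∀ h, h ∈ A ↔ J h l}, ?_, ?_, ?_, ?_, ?_, ?_⟩
  · rintro A ⟨l, h1, hA⟩
    rw [← hJ.card_line l]
    exact Nat.card_congr (Equiv.subtypeEquivRight hA)
  · rw [← hJ.card_pencil]
    change Set.ncard _ = _
    symm
    choose f hf using fun l : {l // J 1 l} => hJ.exists_subgroup hs l.2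
    refine Set.ncard_congr (fun l hl => f ⟨l, hl⟩) (fun l hl => ⟨l, hl, hf _⟩) ?_ ?_
    · intro l l' hl hl' h
      obtain ⟨y, hy, hy1, -⟩ := hJ.exists_third hs l 1 1
      refine hJ.line_unique 1 y hy1.symm l l' hl hy hl' ?_
      exact (hf ⟨l', hl'⟩ y).mp (h ▸ (hf ⟨l, hl⟩ y).mpr hy)
    · rintro A ⟨l, hl, hA⟩
      refine ⟨l, hl, ?_⟩
      ext x
      rw [hf, hA]
  · rintro A ⟨l, hl, hA⟩ B ⟨m, hm, hB⟩ x hxA hxB hx1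
    have hlm : l = m := hJ.line_unique 1 x hx1.symm l m hl ((hA x).mp hxA) hm ((hB x).mp hxB)
    subst hlm
    ext y
    rw [hA, hB]
  · rintro A ⟨l, hl, hA⟩ h
    obtain ⟨σ, hσ⟩ := hJ.left h
    obtain ⟨τ, hτ⟩ := hJ.right h⁻¹
    have key : ∀ x, J x l ↔ J (h * x * h⁻¹) (τ (σ l)) := fun x => (hσ x l).trans (hτ _ _)
    refine ⟨τ (σ l), by simpa using (key 1).mp hl, fun y => ?_⟩
    constructor
    · rintro ⟨x, hx, rfl⟩
      exact (key x).mp ((hA x).mp hx)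
    · intro hy
      refine ⟨h⁻¹ * y * h, (hA _).mpr ((key _).mpr ?_), ?_⟩
      · simpa [mul_assoc] using hy
      · simp [mul_assoc]
  · rintro A ⟨l, hl, hA⟩ w hw
    rw [hA] at hw
    obtain ⟨⟨q, m⟩, ⟨hwm, hqm, hql⟩, hu⟩ := hJ.gq w l hw
    simp only at hwm hqm hql
    have hqA : q ∈ A := (hA q).mpr hql
    refine ⟨q⁻¹, ⟨A.inv_mem hqA, ?_⟩, ?_⟩
    · obtain ⟨σ, hσ⟩ := hJ.right q⁻¹
      have h1 : J 1 (σ m) := by simpa using (hσ q m).mp hqm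
      obtain ⟨B, hB⟩ := hJ.exists_subgroup hs h1
      exact ⟨B, ⟨_, h1, hB⟩, (hB _).mpr ((hσ w m).mp hwm)⟩
    · rintro y ⟨hy, B, ⟨n, hn, hB⟩, hwy⟩
      obtain ⟨σ, hσ⟩ := hJ.right y⁻¹
      have h := hu (y⁻¹, σ n) ⟨by simpa using (hσ _ n).mp ((hB _).mp hwy),
        by simpa using (hσ 1 n).mp hn, (hA _).mp (A.inv_mem hy)⟩
      rw [← (Prod.mk.inj h).1, inv_inv]
  · rintro A ⟨l, hl, hA⟩ B ⟨m, hm, hB⟩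
    obtain ⟨φ, a, hφ⟩ := hJ.flag l m
    have ha : a ∈ B := by
      rw [hB]
      simpa using (hφ 1).mp hl
    have key : ∀ x, x ∈ A ↔ φ x ∈ B := fun x => by
      rw [hA, hφ, ← hB, B.mul_mem_cancel_right ha]
    refine ⟨φ, ?_⟩
    ext y
    constructor
    · rintro ⟨x, hx, rfl⟩
      exact (key x).mp hx
    · intro hy
      exact ⟨φ.symm y, (key _).mpr (by simpa using hy), by simp⟩

end IsGroupQuadrangle

/-! ### Two commuting transitive normal subgroups -/

/-- In a faithful action, an element fixing a point and commuting with a transitive subgroup is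
trivial. -/
theorem eq_one_of_commute_of_smul_eq {P G : Type*} [Group G] [MulAction G P] [FaithfulSMul G P]
    {N : Subgroup G} (hN : ∀ p q : P, ∃ n ∈ N, n • p = q) {g : G} (hg : ∀ n ∈ N, Commute g n)
    {p : P} (hp : g • p = p) : g = 1 := by
  refine FaithfulSMul.eq_of_smul_eq_smul (α := P) fun q => ?_
  obtain ⟨n, hn, rfl⟩ := hN p q
  rw [smul_smul, (hg n hn).eq, mul_smul, hp, one_smul]

theorem exists_mem_smul_eq {P G : Type*} [Group G] [MulAction G P] [FaithfulSMul G P]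
    (hptrans : MulAction.IsPretransitive G P)
    (hprim : ∀ B : Set P, MulAction.IsBlock G B → MulAction.IsTrivialBlock B)
    {N : Subgroup G} (hN : N.Normal) (hne : N ≠ ⊥) (p q : P) : ∃ n ∈ N, n • p = q := by
  have : MulAction.IsPreprimitive G P := { isTrivialBlock_of_isBlock := fun {B} hB => hprim B hB }
  have hfix : MulAction.fixedPoints N P ≠ Set.univ := by
    intro h
    apply hne
    rw [Subgroup.eq_bot_iff_forall]
    intro n hn
    refine FaithfulSMul.eq_of_smul_eq_smul (α := P) fun x => ?_
    have hx : x ∈ MulAction.fixedPoints N P := h ▸ Set.mem_univ x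
    rw [one_smul]
    exact hx ⟨n, hn⟩
  have := MulAction.IsQuasiPreprimitive.isPretransitive_of_normal hfix
  obtain ⟨n, hn⟩ := MulAction.exists_smul_eq N p q
  exact ⟨n, n.2, hn⟩

/-- A regular normal subgroup `M` is identified with the point set via `m ↦ m • p`.  Left
multiplications are the action of `M` itself, right multiplications that of the transitive subgroup
`N` centralising `M`, and `g` acts as conjugation by `g` followed by a right multiplication. -/
theorem isGroupQuadrangle_of_commute {P L G : Type*}
    [Group G] [MulAction G P] [MulAction G L] [FaithfulSMul G P]
    (I : P → L → Prop) (s t : ℕ)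
    (hpls : ∀ p q : P, p ≠ q → ∀ l l' : L, I p l → I q l → I p l' → I q l' → l = l')
    (hline : ∀ l : L, {p : P | I p l}.ncard = s + 1)
    (hpoint : ∀ p : P, {l : L | I p l}.ncard = t + 1)
    (hGQ : ∀ (p : P) (l : L), ¬ I p l →
      ∃! qm : P × L, I p qm.2 ∧ I qm.1 qm.2 ∧ I qm.1 l)
    (hcol : ∀ (g : G) (p : P) (l : L), I p l ↔ I (g • p) (g • l))
    (htL : ∀ l l' : L, ∃ g : G, g • l = l')
    {M N : Subgroup G} [M.Normal] (hM : ∀ p q : P, ∃ m ∈ M, m • p = q)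
    (hN : ∀ p q : P, ∃ n ∈ N, n • p = q) (hMN : ∀ m ∈ M, ∀ n ∈ N, Commute m n) (p : P) :
    IsGroupQuadrangle (fun (m : M) (l : L) => I (m • p) l) s t := by
  have hbij : Function.Bijective (fun m : M => m • p) := by
    constructor
    · intro m m' h
      have h1 : (m⁻¹ * m' : M) • p = p := by
        rw [mul_smul, ← show m • p = m' • p from h, inv_smul_smul]
      have h2 : ((m⁻¹ * m' : M) : G) = 1 :=
        eq_one_of_commute_of_smul_eq hN (hMN _ (m⁻¹ * m' : M).2) h1
      exact (inv_mul_eq_one.mp (Subtype.ext h2))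
    · intro q
      obtain ⟨m, hm, h⟩ := hM p q
      exact ⟨⟨m, hm⟩, h⟩
  refine ⟨?_, ?_, hpoint _, ?_, ?_, ?_, ?_⟩
  · intro m m' hmm l l' h1 h2 h3 h4
    exact hpls _ _ (hbij.1.ne hmm) l l' h1 h2 h3 h4
  · intro l
    rw [← hline l]
    exact Nat.card_congr ((Equiv.ofBijective _ hbij).subtypeEquiv fun m => Iff.rfl)
  · intro m l hml
    obtain ⟨⟨q, k⟩, ⟨h1, h2, h3⟩, hu⟩ := hGQ _ l hml
    obtain ⟨b, rfl⟩ := hbij.2 q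
    refine ⟨(b, k), ⟨h1, h2, h3⟩, ?_⟩
    rintro ⟨b', k'⟩ ⟨h1', h2', h3'⟩
    have h := hu (b' • p, k') ⟨h1', h2', h3'⟩
    rw [Prod.mk.injEq] at h
    exact Prod.ext (hbij.1 h.1) h.2
  · intro a
    refine ⟨fun l => (a : G) • l, fun h l => ?_⟩
    rw [hcol a, mul_smul]
    rfl
  · intro a
    obtain ⟨n, hn, hna⟩ := hN p (a • p)
    refine ⟨fun l => n • l, fun h l => ?_⟩
    have key : n • (h • p) = (h * a) • p := by
      change n • ((h : G) • p) = _
      rw [smul_smul, ← (hMN h h.2 n hn).eq, mul_smul, hna, mul_smul]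
      rfl
    rw [hcol n, key]
  · intro l l'
    obtain ⟨g, rfl⟩ := htL l l'
    obtain ⟨a, ha⟩ := hbij.2 (g • p)
    refine ⟨MulAut.conjNormal g, a, fun h => ?_⟩
    have key : g • (h • p) = (MulAut.conjNormal g h * a) • p := by
      rw [mul_smul, show a • p = g • p from ha]
      change g • ((h : G) • p) = ((MulAut.conjNormal g h : M) : G) • (g • p)
      rw [MulAut.conjNormal_apply, smul_smul, smul_smul, inv_mul_cancel_right]
    rw [hcol g, key]

/-- A collineation group of a finite thick generalised quadrangle that is
faithful and primitive on points and transitive on lines has a unique minimal normal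
subgroup. -/
theorem stmt_0 {P L G : Type*} [Fintype P] [Fintype L]
    [Group G] [MulAction G P] [MulAction G L] [FaithfulSMul G P]
    (I : P → L → Prop) (s t : ℕ) (hs : 2 ≤ s) (ht : 2 ≤ t)
    -- any two distinct points are incident with at most one common line
    (hpls : ∀ p q : P, p ≠ q → ∀ l l' : L, I p l → I q l → I p l' → I q l' → l = l')
    -- every line is incident with exactly s+1 points
    (hline : ∀ l : L, {p : P | I p l}.ncard = s + 1)
    -- every point is incident with exactly t+1 lines
    (hpoint : ∀ p : P, {l : L | I p l}.ncard = t + 1)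
    -- the generalised quadrangle axiom
    (hGQ : ∀ (p : P) (l : L), ¬ I p l →
      ∃! qm : P × L, I p qm.2 ∧ I qm.1 qm.2 ∧ I qm.1 l)
    -- G acts by collineations
    (hcol : ∀ (g : G) (p : P) (l : L), I p l ↔ I (g • p) (g • l))
    -- G is transitive on lines
    (htL : ∀ l l' : L, ∃ g : G, g • l = l')
    -- G is primitive on points
    (hptrans : MulAction.IsPretransitive G P)
    (hprim : ∀ B : Set P, MulAction.IsBlock G B → MulAction.IsTrivialBlock B) :
    ∀ N₁ N₂ : Subgroup G, N₁.Normal → N₂.Normal → N₁ ≠ ⊥ → N₂ ≠ ⊥ →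
      (∀ K : Subgroup G, K.Normal → K ≤ N₁ → K = ⊥ ∨ K = N₁) →
      (∀ K : Subgroup G, K.Normal → K ≤ N₂ → K = ⊥ ∨ K = N₂) →
      N₁ = N₂ := by
  intro N₁ N₂ hn₁ hn₂ hb₁ hb₂ hmin₁ hmin₂
  by_contra hne
  have hinf : N₁ ⊓ N₂ = ⊥ := by
    rcases hmin₁ (N₁ ⊓ N₂) inferInstance inf_le_left with h | h
    · exact h
    · rcases hmin₂ N₁ hn₁ (inf_eq_left.mp h) with h' | h'
      · exact absurd h' hb₁
      · exact absurd h' hne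
  have hcomm : ∀ m ∈ N₁, ∀ n ∈ N₂, Commute m n := fun m hm n hn =>
    Subgroup.commute_of_normal_of_disjoint N₁ N₂ hn₁ hn₂ (disjoint_iff.mpr hinf) m n hm hn
  have htr₁ := exists_mem_smul_eq hptrans hprim hn₁ hb₁
  have htr₂ := exists_mem_smul_eq hptrans hprim hn₂ hb₂
  have : Finite G := Finite.of_injective (fun g : G => (fun p : P => g • p))
    fun g h hgh => FaithfulSMul.eq_of_smul_eq_smul (α := P) (congrFun hgh)
  have hP : Nonempty P := by
    by_contra hP
    rw [not_nonempty_iff] at hP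
    apply hb₁
    rw [Subgroup.eq_bot_iff_forall]
    exact fun n _ => FaithfulSMul.eq_of_smul_eq_smul (α := P) fun q => hP.elim q
  obtain ⟨p⟩ := hP
  obtain ⟨F, hF⟩ := (isGroupQuadrangle_of_commute I s t hpls hline hpoint hGQ hcol htL
    htr₁ htr₂ hcomm p).exists_isLineFamily hs
  -- as `N₁` is abelian, `m⁻¹ * n` centralises `N₁` and fixes `p` as soon as `n • p = m • p`
  have hle : N₂ ≤ N₁ := by
    intro n hn
    obtain ⟨m, hm, hmn⟩ := htr₁ p (n • p)
    have h1 : m⁻¹ * n = 1 := by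
      refine eq_one_of_commute_of_smul_eq htr₁ (fun k hk => ?_) (p := p) ?_
      · have h2 : Commute m k :=
          congrArg Subtype.val (hF.commute hs ht (⟨m, hm⟩ : N₁) ⟨k, hk⟩).eq
        exact h2.inv_left.mul_left (hcomm k hk n hn).symm
      · rw [mul_smul, ← hmn, inv_smul_smul]
    rwa [← inv_mul_eq_one.mp h1]
  exact hb₂ (by rw [← hinf, inf_eq_right.mpr hle])
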